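/- arXiv:1607.02563 — 2 statements merged into one kernel-verified Lean document; each statement's English description precedes it below -/
import Mathlib

section
/- Let B be a real separable Banach space, (Ω, 𝓕, ℙ) a probability space, and X : B × Ω → B jointly measurable; write X^x := X(x,·). Define the Markov operator P f(x) := E[f(X^x)] for bounded measurable f : B → ℝ, and assume the probability measure μ on B is invariant for P, i.e. ∫_B P f dμ = ∫_B f dμ for all bounded measurable f. Fix k ∈ B. Suppose there is a jointly measurable family M : B × Ω → ℝ with ∫_B E[M_x²] μ(dx) < ∞ such that the integration by parts formula E[(∂_k f)(X^x)] = E[f(X^x) M_x] holds for every f ∈ C_b²(B) and μ-a.e. x ∈ B. Then the form (ℰ_k, C_b²(B)) is closable in L²(μ): whenever a sequence (f_n) ⊂ C_b²(B) satisfies f_n → 0 in L²(μ) and ∂_k f_n → Z in L²(μ) for some Z ∈ L²(μ), one has Z = 0 in L²(μ). -/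
open MeasureTheory Filter

/-- `f ∈ C_b²(B)`: `f` is twice continuously Fréchet differentiable, bounded, with bounded
first and second Fréchet derivatives. -/
def IsCb2 {B : Type*} [NormedAddCommGroup B] [NormedSpace ℝ B] (f : B → ℝ) : Prop :=
  ContDiff ℝ 2 f ∧ (∃ c, ∀ x, |f x| ≤ c) ∧ (∃ c, ∀ x, ‖fderiv ℝ f x‖ ≤ c) ∧
    (∃ c, ∀ x, ‖fderiv ℝ (fderiv ℝ f) x‖ ≤ c)

/-! The stationary form of the integration by parts formula is `∫ ∂_k g dμ = ∫ g(X) M d(μ ⊗ ℙ)`.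
Applied to `g = f_n φ` it moves the derivative from `f_n` to the test function `φ ∈ C_b²(B)`:
`∫ (∂_k f_n) φ dμ = ∫ f_n(X) φ(X) M d(μ ⊗ ℙ) - ∫ f_n ∂_k φ dμ`. Since `μ` is the law of `X` under
`μ ⊗ ℙ`, the functions `f_n(X)` tend to `0` in `L²` along with `f_n`, so in the limit
`∫ Z φ dμ = 0`. The functions `cos ∘ L` and `sin ∘ L`, with `L` in the dual of `B`, belong to
`C_b²(B)`, hence the Fourier transform of `Z μ` vanishes, and so does `Z`. -/

section SquareIntegrable

variable {α : Type*} [MeasurableSpace α] {μ : Measure α}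

lemma abs_integral_mul_le_sqrt_mul_sqrt {f g : α → ℝ} (hf : MemLp f 2 μ) (hg : MemLp g 2 μ) :
    |∫ x, f x * g x ∂μ| ≤ √(∫ x, f x ^ 2 ∂μ) * √(∫ x, g x ^ 2 ∂μ) := by
  have two : ENNReal.ofReal 2 = 2 := ENNReal.ofReal_ofNat 2
  calc |∫ x, f x * g x ∂μ| ≤ ∫ x, |f x * g x| ∂μ := abs_integral_le_integral_abs
    _ = ∫ x, ‖f x‖ * ‖g x‖ ∂μ := by simp only [abs_mul, Real.norm_eq_abs]
    _ ≤ (∫ x, ‖f x‖ ^ (2 : ℝ) ∂μ) ^ (1 / 2 : ℝ) * (∫ x, ‖g x‖ ^ (2 : ℝ) ∂μ) ^ (1 / 2 : ℝ) :=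
      integral_mul_norm_le_Lp_mul_Lq .two_two (two ▸ hf) (two ▸ hg)
    _ = √(∫ x, f x ^ 2 ∂μ) * √(∫ x, g x ^ 2 ∂μ) := by
      simp only [Real.norm_eq_abs, Real.rpow_two, sq_abs, Real.sqrt_eq_rpow]

lemma tendsto_integral_mul_of_tendsto_integral_sub_sq {ι : Type*} {l : Filter ι}
    {f : ι → α → ℝ} {f₀ g : α → ℝ} (hf : ∀ i, MemLp (f i) 2 μ) (hf₀ : MemLp f₀ 2 μ)
    (hg : MemLp g 2 μ) (h : Tendsto (fun i => ∫ x, (f i x - f₀ x) ^ 2 ∂μ) l (nhds 0)) :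
    Tendsto (fun i => ∫ x, f i x * g x ∂μ) l (nhds (∫ x, f₀ x * g x ∂μ)) := by
  have bound_tendsto : Tendsto
      (fun i => √(∫ x, (f i x - f₀ x) ^ 2 ∂μ) * √(∫ x, g x ^ 2 ∂μ)) l (nhds 0) := by
    simpa using h.sqrt.mul_const (√(∫ x, g x ^ 2 ∂μ))
  refine tendsto_iff_norm_sub_tendsto_zero.2
    (squeeze_zero (fun _ => norm_nonneg _) (fun i => ?_) bound_tendsto)
  have sub_eq : ∫ x, f i x * g x ∂μ - ∫ x, f₀ x * g x ∂μ = ∫ x, (f i x - f₀ x) * g x ∂μ := by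
    simp only [sub_mul]
    exact (integral_sub ((hf i).integrable_mul hg) (hf₀.integrable_mul hg)).symm
  rw [sub_eq]
  exact abs_integral_mul_le_sqrt_mul_sqrt ((hf i).sub hf₀) hg

end SquareIntegrable

lemma integral_comp_eq_of_measurePreserving {α β G : Type*} [MeasurableSpace α]
    [MeasurableSpace β] [NormedAddCommGroup G] [NormedSpace ℝ G] {μ : Measure α} {ν : Measure β}
    {X : α → β} (hX : MeasurePreserving X μ ν) {f : β → G} (hf : AEStronglyMeasurable f ν) :
    ∫ a, f (X a) ∂μ = ∫ b, f b ∂ν := by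
  rw [← hX.map_eq] at hf ⊢
  exact (integral_map hX.aemeasurable hf).symm

lemma measurePreserving_of_forall_integral_integral_eq {α β Ω : Type*} [MeasurableSpace α]
    [MeasurableSpace β] [MeasurableSpace Ω] {μ : Measure α} [IsFiniteMeasure μ] {ν : Measure β}
    [IsFiniteMeasure ν] {ℙ : Measure Ω} [IsFiniteMeasure ℙ] {X : α × Ω → β} (hX : Measurable X)
    (h : ∀ f : β → ℝ, Measurable f → (∃ c, ∀ y, |f y| ≤ c) →
      ∫ x, ∫ ω, f (X (x, ω)) ∂ℙ ∂μ = ∫ y, f y ∂ν) :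
    MeasurePreserving X (μ.prod ℙ) ν := by
  refine ⟨hX, Measure.ext fun s hs => ?_⟩
  have indicator_bound (y : β) : |s.indicator (1 : β → ℝ) y| ≤ 1 := by
    by_cases hy : y ∈ s <;> simp [hy]
  have indicator_meas : Measurable (s.indicator (1 : β → ℝ)) := measurable_one.indicator hs
  have indicator_int : Integrable (fun p => s.indicator (1 : β → ℝ) (X p)) (μ.prod ℙ) :=
    .of_bound (indicator_meas.comp hX).aestronglyMeasurable 1 (.of_forall fun p =>
      indicator_bound (X p))
  refine (measureReal_eq_measureReal_iff).1 ?_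
  calc ((μ.prod ℙ).map X).real s = ∫ y, s.indicator 1 y ∂(μ.prod ℙ).map X :=
        (integral_indicator_one hs).symm
    _ = ∫ p, s.indicator 1 (X p) ∂μ.prod ℙ :=
        integral_map hX.aemeasurable indicator_meas.aestronglyMeasurable
    _ = ∫ x, ∫ ω, s.indicator 1 (X (x, ω)) ∂ℙ ∂μ := integral_prod _ indicator_int
    _ = ∫ y, s.indicator 1 y ∂ν := h _ indicator_meas ⟨1, indicator_bound⟩
    _ = ν.real s := integral_indicator_one hs

section FourierUniqueness

variable {E : Type*} [NormedAddCommGroup E] [NormedSpace ℝ E]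
  [TopologicalSpace.SeparableSpace E] [MeasurableSpace E] [BorelSpace E]

lemma ext_of_charFunDual_of_separableSpace {μ ν : Measure E} [IsFiniteMeasure μ]
    [IsFiniteMeasure ν] (h : charFunDual μ = charFunDual ν) : μ = ν := by
  -- `Measure.ext_of_charFunDual` needs a complete space, so compare the images of `μ` and `ν` in
  -- the completion; they determine `μ` and `ν` because the Borel sets of `E` are traces of Borel
  -- sets of its completion.
  borelize (UniformSpace.Completion E)
  have := UniformSpace.secondCountable_of_separable (UniformSpace.Completion E)
  let e : E →L[ℝ] UniformSpace.Completion E := UniformSpace.Completion.toComplL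
  have map_eq : μ.map e = ν.map e :=
    Measure.ext_of_charFunDual (funext fun L => by rw [charFunDual_map, charFunDual_map, h])
  have isInducing_e : Topology.IsInducing e :=
    (UniformSpace.Completion.isUniformEmbedding_coe E).isUniformInducing.isInducing
  have comap_eq : ‹MeasurableSpace E› = (borel (UniformSpace.Completion E)).comap e :=
    BorelSpace.measurable_eq.trans
      ((congrArg (@borel E) isInducing_e.eq_induced).trans borel_comap)
  refine Measure.ext fun s hs => ?_
  obtain ⟨t, ht, rfl⟩ : ∃ t, MeasurableSet t ∧ e ⁻¹' t = s := by rwa [comap_eq] at hs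
  rw [← Measure.map_apply e.measurable ht, ← Measure.map_apply e.measurable ht, map_eq]

lemma ae_eq_zero_of_forall_integral_smul_cexp_eq_zero {μ : Measure E} {f : E → ℝ}
    (hf : Integrable f μ)
    (h : ∀ L : StrongDual ℝ E, ∫ x, f x • Complex.exp (L x * Complex.I) ∂μ = 0) :
    f =ᵐ[μ] 0 := by
  have hf_neg : Integrable (fun x => -f x) μ := hf.neg
  have sub_eq (x : E) : (ENNReal.ofReal (f x)).toReal - (ENNReal.ofReal (-f x)).toReal = f x := by
    rw [ENNReal.toReal_ofReal', ENNReal.toReal_ofReal', max_zero_sub_max_neg_zero_eq_self]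
  have charFunDual_withDensity {g : E → ℝ} (hg : Integrable g μ) (L : StrongDual ℝ E) :
      charFunDual (μ.withDensity fun x => ENNReal.ofReal (g x)) L =
        ∫ x, (ENNReal.ofReal (g x)).toReal • Complex.exp (L x * Complex.I) ∂μ := by
    rw [charFunDual_apply, integral_withDensity_eq_integral_toReal_smul₀
      hg.aemeasurable.ennreal_ofReal (.of_forall fun _ => ENNReal.ofReal_lt_top)]
  have integrable_smul_cexp {g : E → ℝ} (hg : Integrable g μ) (L : StrongDual ℝ E) :
      Integrable (fun x => (ENNReal.ofReal (g x)).toReal • Complex.exp (L x * Complex.I)) μ :=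
    (integrable_toReal_of_lintegral_ne_top hg.aemeasurable.ennreal_ofReal
      hg.lintegral_lt_top.ne).smul_bdd 1
      (by fun_prop) (.of_forall fun x => (Complex.norm_exp_ofReal_mul_I (L x)).le)
  have := isFiniteMeasure_withDensity hf.lintegral_lt_top.ne
  have := isFiniteMeasure_withDensity hf_neg.lintegral_lt_top.ne
  have withDensity_eq : (μ.withDensity fun x => ENNReal.ofReal (f x)) =
      μ.withDensity fun x => ENNReal.ofReal (-f x) := by
    refine ext_of_charFunDual_of_separableSpace (funext fun L => sub_eq_zero.1 ?_)
    rw [charFunDual_withDensity hf, charFunDual_withDensity hf_neg,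
      ← integral_sub (integrable_smul_cexp hf L) (integrable_smul_cexp hf_neg L)]
    simpa only [← sub_smul, sub_eq] using h L
  have ofReal_eq := (withDensity_eq_iff hf.aemeasurable.ennreal_ofReal
    hf_neg.aemeasurable.ennreal_ofReal hf.lintegral_lt_top.ne).1 withDensity_eq
  filter_upwards [ofReal_eq] with x hx
  rw [← sub_eq x, hx, sub_self, Pi.zero_apply]

end FourierUniqueness

lemma isCb2_iff_iteratedFDeriv {E : Type*} [NormedAddCommGroup E] [NormedSpace ℝ E] {f : E → ℝ} :
    IsCb2 f ↔ ContDiff ℝ 2 f ∧ ∀ n ≤ 2, ∃ c, ∀ x, ‖iteratedFDeriv ℝ n f x‖ ≤ c := by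
  have norm_two (x : E) : ‖iteratedFDeriv ℝ 2 f x‖ = ‖fderiv ℝ (fderiv ℝ f) x‖ := by
    rw [← norm_iteratedFDeriv_one, norm_iteratedFDeriv_fderiv]
  have forall_le_two (P : ℕ → Prop) : (∀ n ≤ 2, P n) ↔ P 0 ∧ P 1 ∧ P 2 :=
    ⟨fun h => ⟨h 0 (by lia), h 1 (by lia), h 2 le_rfl⟩, fun h n hn => by interval_cases n <;> tauto⟩
  simp only [IsCb2, forall_le_two, norm_iteratedFDeriv_zero, norm_iteratedFDeriv_one, norm_two,
    Real.norm_eq_abs]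

namespace IsCb2

variable {E F : Type*} [NormedAddCommGroup E] [NormedSpace ℝ E]
  [NormedAddCommGroup F] [NormedSpace ℝ F] {f g : E → ℝ}

lemma differentiable (hf : IsCb2 f) : Differentiable ℝ f :=
  hf.1.differentiable two_ne_zero

lemma mul (hf : IsCb2 f) (hg : IsCb2 g) : IsCb2 (fun x => f x * g x) := by
  rw [isCb2_iff_iteratedFDeriv] at hf hg ⊢
  refine ⟨hf.1.mul hg.1, fun n hn => ?_⟩
  choose! a ha using hf.2
  choose! b hb using hg.2
  refine ⟨∑ i ∈ Finset.range (n + 1), n.choose i * a i * b (n - i), fun x => ?_⟩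
  refine (norm_iteratedFDeriv_mul_le hf.1 hg.1 x (mod_cast hn)).trans
    (Finset.sum_le_sum fun i hi => ?_)
  have hi : i ≤ 2 := by grind
  have := (norm_nonneg _).trans (ha i hi x)
  gcongr
  · exact ha i hi x
  · exact hb (n - i) (by lia) x

lemma comp_clm {u : F → ℝ} (hu : IsCb2 u) (L : E →L[ℝ] F) : IsCb2 (fun x => u (L x)) := by
  rw [isCb2_iff_iteratedFDeriv] at hu ⊢
  refine ⟨hu.1.comp L.contDiff, fun n hn => ?_⟩
  obtain ⟨c, hc⟩ := hu.2 n hn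
  refine ⟨c * ∏ _i : Fin n, ‖L‖, fun x => ?_⟩
  calc ‖iteratedFDeriv ℝ n (u ∘ L) x‖ = ‖(iteratedFDeriv ℝ n u (L x)).compContinuousLinearMap
          fun _ => L‖ := by rw [L.iteratedFDeriv_comp_right hu.1 x (mod_cast hn)]
    _ ≤ ‖iteratedFDeriv ℝ n u (L x)‖ * ∏ _i : Fin n, ‖L‖ :=
        ContinuousMultilinearMap.norm_compContinuousLinearMap_le _ _
    _ ≤ c * ∏ _i : Fin n, ‖L‖ := by gcongr; exact hc (L x)

lemma cos : IsCb2 Real.cos :=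
  isCb2_iff_iteratedFDeriv.2 ⟨Real.contDiff_cos, fun n _ => ⟨1, fun x => by
    rw [norm_iteratedFDeriv_eq_norm_iteratedDeriv]
    exact Real.abs_iteratedDeriv_cos_le_one n x⟩⟩

lemma sin : IsCb2 Real.sin :=
  isCb2_iff_iteratedFDeriv.2 ⟨Real.contDiff_sin, fun n _ => ⟨1, fun x => by
    rw [norm_iteratedFDeriv_eq_norm_iteratedDeriv]
    exact Real.abs_iteratedDeriv_sin_le_one n x⟩⟩

lemma continuous_fderiv_apply (hf : IsCb2 f) (k : E) : Continuous fun x => fderiv ℝ f x k :=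
  (hf.1.continuous_fderiv two_ne_zero).clm_apply continuous_const

lemma exists_abs_fderiv_apply_le (hf : IsCb2 f) (k : E) : ∃ c, ∀ x, |fderiv ℝ f x k| ≤ c := by
  obtain ⟨c, hc⟩ := hf.2.2.1
  exact ⟨c * ‖k‖, fun x => (fderiv ℝ f x).le_of_opNorm_le (hc x) k⟩

variable [MeasurableSpace E] [BorelSpace E] {μ : Measure E}

lemma memLp [IsFiniteMeasure μ] (hf : IsCb2 f) (p : ENNReal) :
    MemLp f p μ := by
  obtain ⟨c, hc⟩ := hf.2.1
  exact .of_bound hf.1.continuous.aestronglyMeasurable c (.of_forall hc)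

lemma memLp_fderiv_apply [IsFiniteMeasure μ] (hf : IsCb2 f) (k : E)
    (p : ENNReal) : MemLp (fun x => fderiv ℝ f x k) p μ := by
  obtain ⟨c, hc⟩ := hf.exists_abs_fderiv_apply_le k
  exact .of_bound (hf.continuous_fderiv_apply k).aestronglyMeasurable c (.of_forall hc)

end IsCb2

lemma ae_eq_zero_of_forall_isCb2_integral_mul_eq_zero {E : Type*} [NormedAddCommGroup E]
    [NormedSpace ℝ E] [TopologicalSpace.SeparableSpace E] [MeasurableSpace E] [BorelSpace E]
    {μ : Measure E} {f : E → ℝ} (hf : Integrable f μ)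
    (h : ∀ φ : E → ℝ, IsCb2 φ → ∫ x, f x * φ x ∂μ = 0) : f =ᵐ[μ] 0 := by
  refine ae_eq_zero_of_forall_integral_smul_cexp_eq_zero hf fun L => ?_
  have integrable_cos : Integrable (fun x => f x * Real.cos (L x)) μ :=
    hf.mul_bdd (c := 1) (by fun_prop) (.of_forall fun x => Real.abs_cos_le_one (L x))
  have integrable_sin : Integrable (fun x => f x * Real.sin (L x)) μ :=
    hf.mul_bdd (c := 1) (by fun_prop) (.of_forall fun x => Real.abs_sin_le_one (L x))
  calc ∫ x, f x • Complex.exp (L x * Complex.I) ∂μ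
      = ∫ x, (((f x * Real.cos (L x) : ℝ) : ℂ) +
          ((f x * Real.sin (L x) : ℝ) : ℂ) * Complex.I) ∂μ := by
        congr with x
        rw [Complex.exp_mul_I, Complex.real_smul]
        push_cast
        ring
    _ = ((∫ x, f x * Real.cos (L x) ∂μ : ℝ) : ℂ) +
          ((∫ x, f x * Real.sin (L x) ∂μ : ℝ) : ℂ) * Complex.I := by
        rw [integral_add integrable_cos.ofReal (integrable_sin.ofReal.mul_const _),
          integral_mul_const, integral_complex_ofReal, integral_complex_ofReal]
    _ = 0 := by simp [h _ (IsCb2.cos.comp_clm L), h _ (IsCb2.sin.comp_clm L)]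

section IntegrationByParts

variable {B α : Type*} [NormedAddCommGroup B] [NormedSpace ℝ B] [MeasurableSpace B]
  [BorelSpace B] [MeasurableSpace α] {μ : Measure B} [IsFiniteMeasure μ] {ρ : Measure α}
  {X : α → B} {M : α → ℝ} {k : B}

lemma integral_fderiv_mul_eq_sub
    (hIBP : ∀ g : B → ℝ, IsCb2 g → ∫ x, fderiv ℝ g x k ∂μ = ∫ a, g (X a) * M a ∂ρ)
    {f φ : B → ℝ} (hf : IsCb2 f) (hφ : IsCb2 φ) :
    ∫ x, fderiv ℝ f x k * φ x ∂μ =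
      ∫ a, f (X a) * (φ (X a) * M a) ∂ρ - ∫ x, f x * fderiv ℝ φ x k ∂μ := by
  have leibniz (x : B) : fderiv ℝ (fun y => f y * φ y) x k =
      fderiv ℝ f x k * φ x + f x * fderiv ℝ φ x k := by
    rw [fderiv_fun_mul (hf.differentiable x) (hφ.differentiable x)]
    simp [mul_comm, add_comm]
  have integrable_left : Integrable (fun x => fderiv ℝ f x k * φ x) μ :=
    (hf.memLp_fderiv_apply k 2).integrable_mul (hφ.memLp 2)
  have integrable_right : Integrable (fun x => f x * fderiv ℝ φ x k) μ :=
    (hf.memLp 2).integrable_mul (hφ.memLp_fderiv_apply k 2)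
  have ibp_mul := hIBP _ (hf.mul hφ)
  simp only [leibniz, integral_add integrable_left integrable_right, mul_assoc] at ibp_mul
  exact eq_sub_of_add_eq ibp_mul

lemma integral_fderiv_eq_of_ae_integration_by_parts {Ω : Type*}
    [MeasurableSpace Ω] {ℙ : Measure Ω} [SFinite ℙ] {X : B × Ω → B} {M : B × Ω → ℝ}
    (hX : MeasurePreserving X (μ.prod ℙ) μ) (hM : Integrable M (μ.prod ℙ)) {g : B → ℝ}
    (hg : IsCb2 g)
    (hIBP : ∀ᵐ x ∂μ, ∫ ω, fderiv ℝ g (X (x, ω)) k ∂ℙ = ∫ ω, g (X (x, ω)) * M (x, ω) ∂ℙ) :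
    ∫ x, fderiv ℝ g x k ∂μ = ∫ p, g (X p) * M p ∂μ.prod ℙ := by
  have memLp_fderiv := hg.memLp_fderiv_apply (μ := μ) k 1
  have integrable_fderiv : Integrable (fun p => fderiv ℝ g (X p) k) (μ.prod ℙ) :=
    memLp_one_iff_integrable.1 (memLp_fderiv.comp_measurePreserving hX)
  have integrable_mul : Integrable (fun p => g (X p) * M p) (μ.prod ℙ) :=
    hM.smul_of_top_right ((hg.memLp ⊤).comp_measurePreserving hX)
  calc ∫ x, fderiv ℝ g x k ∂μ
      = ∫ p, fderiv ℝ g (X p) k ∂μ.prod ℙ :=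
        (integral_comp_eq_of_measurePreserving hX memLp_fderiv.aestronglyMeasurable).symm
    _ = ∫ x, ∫ ω, fderiv ℝ g (X (x, ω)) k ∂ℙ ∂μ := integral_prod _ integrable_fderiv
    _ = ∫ x, ∫ ω, g (X (x, ω)) * M (x, ω) ∂ℙ ∂μ := integral_congr_ae hIBP
    _ = ∫ p, g (X p) * M p ∂μ.prod ℙ := (integral_prod _ integrable_mul).symm

theorem closability_of_form_from_integration_by_parts_general
    [TopologicalSpace.SeparableSpace B] (hX : MeasurePreserving X ρ μ) (hM : MemLp M 2 ρ)
    (hIBP : ∀ g : B → ℝ, IsCb2 g → ∫ x, fderiv ℝ g x k ∂μ = ∫ a, g (X a) * M a ∂ρ)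
    {ι : Type*} {l : Filter ι} [l.NeBot] {f : ι → B → ℝ} (hf : ∀ i, IsCb2 (f i))
    {Z : B → ℝ} (hZ : MemLp Z 2 μ)
    (hf0 : Tendsto (fun i => ∫ x, f i x ^ 2 ∂μ) l (nhds 0))
    (hfZ : Tendsto (fun i => ∫ x, (fderiv ℝ (f i) x k - Z x) ^ 2 ∂μ) l (nhds 0)) :
    Z =ᵐ[μ] 0 := by
  refine ae_eq_zero_of_forall_isCb2_integral_mul_eq_zero (hZ.integrable one_le_two) fun φ hφ => ?_
  have tendsto_left : Tendsto (fun i => ∫ x, fderiv ℝ (f i) x k * φ x ∂μ) l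
      (nhds (∫ x, Z x * φ x ∂μ)) :=
    tendsto_integral_mul_of_tendsto_integral_sub_sq (fun i => (hf i).memLp_fderiv_apply k 2) hZ
      (hφ.memLp 2) hfZ
  have tendsto_right : Tendsto (fun i => ∫ x, f i x * fderiv ℝ φ x k ∂μ) l (nhds 0) := by
    simpa using tendsto_integral_mul_of_tendsto_integral_sub_sq (fun i => (hf i).memLp 2)
      MemLp.zero (hφ.memLp_fderiv_apply k 2) (by simpa using hf0)
  have integral_sq_comp (i : ι) : ∫ a, f i (X a) ^ 2 ∂ρ = ∫ x, f i x ^ 2 ∂μ :=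
    integral_comp_eq_of_measurePreserving hX ((hf i).1.continuous.pow 2).aestronglyMeasurable
  have tendsto_comp : Tendsto (fun i => ∫ a, f i (X a) * (φ (X a) * M a) ∂ρ) l (nhds 0) := by
    simp only [← integral_sq_comp] at hf0
    simpa using tendsto_integral_mul_of_tendsto_integral_sub_sq
      (fun i => ((hf i).memLp 2).comp_measurePreserving hX) MemLp.zero
      (hM.mul' ((hφ.memLp ⊤).comp_measurePreserving hX)) (by simpa using hf0)
  refine tendsto_nhds_unique tendsto_left ?_
  simpa only [integral_fderiv_mul_eq_sub hIBP (hf _) hφ, sub_zero] using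
    tendsto_comp.sub tendsto_right

end IntegrationByParts

/-- Proposition 1.1: closability of the form `ℰ_k` from the integration by parts formula. -/
theorem closability_of_form_from_integration_by_parts
    {B : Type*} [NormedAddCommGroup B] [NormedSpace ℝ B] [CompleteSpace B]
    [TopologicalSpace.SeparableSpace B] [MeasurableSpace B] [BorelSpace B]
    {Ω : Type*} [MeasurableSpace Ω] (ℙ : Measure Ω) [IsProbabilityMeasure ℙ]
    (X : B × Ω → B) (hX : Measurable X)
    (μ : Measure B) [IsProbabilityMeasure μ]
    -- invariance of `μ` for the Markov operator `P f (x) = E[f (X^x)]`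
    (hinv : ∀ f : B → ℝ, Measurable f → (∃ c, ∀ x, |f x| ≤ c) →
      ∫ x, ∫ ω, f (X (x, ω)) ∂ℙ ∂μ = ∫ x, f x ∂μ)
    (k : B)
    (M : B × Ω → ℝ) (hM : Measurable M)
    -- `M ∈ L²(ℙ × μ)`
    (hM2 : Integrable (fun p => (M p) ^ 2) (μ.prod ℙ))
    -- integration by parts formula: `P (∂_k f) (x) = E[f (X^x) M_x]` for μ-a.e. `x`
    (hIBP : ∀ f : B → ℝ, IsCb2 f →
      ∀ᵐ x ∂μ, ∫ ω, fderiv ℝ f (X (x, ω)) k ∂ℙ = ∫ ω, f (X (x, ω)) * M (x, ω) ∂ℙ)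
    -- a sequence in `C_b²(B)` with `f_n → 0` and `∂_k f_n → Z` in `L²(μ)`
    (f : ℕ → B → ℝ) (hf : ∀ n, IsCb2 (f n))
    (Z : B → ℝ) (hZ : MemLp Z 2 μ)
    (hf0 : Tendsto (fun n => ∫ x, (f n x) ^ 2 ∂μ) atTop (nhds 0))
    (hfZ : Tendsto (fun n => ∫ x, (fderiv ℝ (f n) x k - Z x) ^ 2 ∂μ) atTop (nhds 0)) :
    Z =ᵐ[μ] 0 := by
  have hXμ := measurePreserving_of_forall_integral_integral_eq hX hinv
  have hM' := (memLp_two_iff_integrable_sq hM.aestronglyMeasurable).2 hM2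
  exact closability_of_form_from_integration_by_parts_general hXμ hM'
    (fun g hg => integral_fderiv_eq_of_ae_integration_by_parts hXμ (hM'.integrable one_le_two) hg
      (hIBP g hg)) hf hZ hf0 hfZ
end

section
/- Let H be a real separable Hilbert space with orthonormal basis (e_i)_{i≥1}, let (λ_i)_{i≥1} be positive reals, let μ be a probability measure on H, and let (c_i)_{i≥1} be nonnegative reals such that for every i and every f ∈ C_b¹(H): |∫_H Df(x)[e_i] μ(dx)| ≤ c_i (∫_H f² dμ)^{1/2}. Assume C² := Σ_{i≥1} c_i²/λ_i² < ∞. Then for every k ∈ H with Σ_{i≥1} λ_i² ⟨k, e_i⟩² < ∞ and every f ∈ C_b¹(H): |∫_H Df(x)[k] μ(dx)| ≤ C · (Σ_{i≥1} λ_i² ⟨k, e_i⟩²)^{1/2} · (∫_H f² dμ)^{1/2}. -/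
open MeasureTheory Filter

/-- `f ∈ C_b¹(H)`: `f` is continuously Fréchet differentiable, bounded, with bounded
Fréchet derivative. -/
def IsCb1 {H : Type*} [NormedAddCommGroup H] [NormedSpace ℝ H] (f : H → ℝ) : Prop :=
  ContDiff ℝ 1 f ∧ (∃ c, ∀ x, |f x| ≤ c) ∧ (∃ c, ∀ x, ‖fderiv ℝ f x‖ ≤ c)

/-!
`v ↦ ∫ Df(x)[v] μ(dx)` is a continuous linear functional because `Df` is bounded and `μ` is finite.
It can therefore be expanded along the basis, and the weighted Cauchy–Schwarz inequality
`∑ cᵢ |⟨k, eᵢ⟩| = ∑ (cᵢ / λᵢ) (λᵢ |⟨k, eᵢ⟩|) ≤ (∑ cᵢ² / λᵢ²)^{1/2} (∑ λᵢ² ⟨k, eᵢ⟩²)^{1/2}`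
sums the bounds on the basis vectors.
-/

section CauchySchwarz

variable {ι : Type*}

lemma sum_mul_le_sqrt_tsum_sq_mul_sqrt_tsum_sq {a b : ι → ℝ}
    (ha : Summable fun i => a i ^ 2) (hb : Summable fun i => b i ^ 2) (s : Finset ι) :
    ∑ i ∈ s, a i * b i ≤ √(∑' i, a i ^ 2) * √(∑' i, b i ^ 2) :=
  calc
    ∑ i ∈ s, a i * b i ≤ √(∑ i ∈ s, a i ^ 2) * √(∑ i ∈ s, b i ^ 2) :=
      Real.sum_mul_le_sqrt_mul_sqrt s a b
    _ ≤ √(∑' i, a i ^ 2) * √(∑' i, b i ^ 2) := by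
      gcongr
      · exact ha.sum_le_tsum s fun i _ => sq_nonneg (a i)
      · exact hb.sum_le_tsum s fun i _ => sq_nonneg (b i)

lemma sum_mul_le_sqrt_tsum_div_mul_sqrt_tsum_mul {w a b : ι → ℝ} (hw : ∀ i, w i ≠ 0)
    (ha : Summable fun i => a i ^ 2 / w i ^ 2) (hb : Summable fun i => w i ^ 2 * b i ^ 2)
    (s : Finset ι) :
    ∑ i ∈ s, a i * b i ≤ √(∑' i, a i ^ 2 / w i ^ 2) * √(∑' i, w i ^ 2 * b i ^ 2) := by
  have hab : ∀ i, a i * b i = a i / w i * (w i * b i) := fun i => by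
    rw [← mul_assoc, div_mul_cancel₀ _ (hw i)]
  simp only [hab, ← div_pow, ← mul_pow] at ha hb ⊢
  exact sum_mul_le_sqrt_tsum_sq_mul_sqrt_tsum_sq ha hb s

end CauchySchwarz

lemma norm_apply_le_of_norm_apply_hilbertBasis_le {𝕜 ι H E : Type*} [RCLike 𝕜]
    [NormedAddCommGroup H] [InnerProductSpace 𝕜 H] [SeminormedAddCommGroup E] [NormedSpace 𝕜 E]
    (e : HilbertBasis ι 𝕜 H) (L : H →L[𝕜] E) {w c : ι → ℝ} {M : ℝ} (hM : 0 ≤ M)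
    (hw : ∀ i, w i ≠ 0) (hL : ∀ i, ‖L (e i)‖ ≤ c i * M)
    (hc : Summable fun i => c i ^ 2 / w i ^ 2) {k : H}
    (hk : Summable fun i => w i ^ 2 * ‖inner 𝕜 k (e i)‖ ^ 2) :
    ‖L k‖ ≤ √(∑' i, c i ^ 2 / w i ^ 2) * √(∑' i, w i ^ 2 * ‖inner 𝕜 k (e i)‖ ^ 2) * M := by
  refine le_of_tendsto' ((e.hasSum_repr k).mapL L).norm fun s => ?_
  calc
    ‖∑ i ∈ s, L (e.repr k i • e i)‖ ≤ ∑ i ∈ s, ‖L (e.repr k i • e i)‖ := norm_sum_le _ _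
    _ = ∑ i ∈ s, ‖L (e i)‖ * ‖inner 𝕜 k (e i)‖ := by
      simp only [map_smul, norm_smul, e.repr_apply_apply, norm_inner_symm, mul_comm]
    _ ≤ ∑ i ∈ s, c i * M * ‖inner 𝕜 k (e i)‖ := by
      gcongr with i
      exact hL i
    _ = (∑ i ∈ s, c i * ‖inner 𝕜 k (e i)‖) * M := by
      simp only [Finset.sum_mul, mul_right_comm]
    _ ≤ _ := by
      gcongr
      exact sum_mul_le_sqrt_tsum_div_mul_sqrt_tsum_mul hw hc hk s

section WeakIntegral

variable {X 𝕜 V E : Type*} [MeasurableSpace X] {μ : Measure X} [NontriviallyNormedField 𝕜]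
  [SeminormedAddCommGroup V] [NormedSpace 𝕜 V]
  [NormedAddCommGroup E] [NormedSpace 𝕜 E] {F : X → V →L[𝕜] E} {g : X → ℝ}

lemma integrable_clm_apply_of_norm_le (hF : ∀ v, AEStronglyMeasurable (fun x => F x v) μ)
    (hg : Integrable g μ) (hFg : ∀ᵐ x ∂μ, ‖F x‖ ≤ g x) (v : V) :
    Integrable (fun x => F x v) μ :=
  (hg.mul_const ‖v‖).mono' (hF v) <| hFg.mono fun x hx => (F x).le_of_opNorm_le hx v

variable [NormedSpace ℝ E] [SMulCommClass ℝ 𝕜 E]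

/-- The weak integral `v ↦ ∫ F x v ∂μ` of a family `F` of operators dominated by an integrable
function `g`. Only the maps `x ↦ F x v` are assumed measurable, so that `F` need not be Bochner
integrable; this happens for derivatives on nonseparable spaces. -/
noncomputable def weakIntegral (hF : ∀ v, AEStronglyMeasurable (fun x => F x v) μ)
    (hg : Integrable g μ) (hFg : ∀ᵐ x ∂μ, ‖F x‖ ≤ g x) : V →L[𝕜] E :=
  LinearMap.mkContinuous
    { toFun v := ∫ x, F x v ∂μ
      map_add' v v' := by
        simp only [map_add]
        exact integral_add (integrable_clm_apply_of_norm_le hF hg hFg v)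
          (integrable_clm_apply_of_norm_le hF hg hFg v')
      map_smul' r v := by
        simp only [map_smul, RingHom.id_apply, integral_smul] }
    (∫ x, g x ∂μ) fun v => by
      rw [← integral_mul_const]
      exact norm_integral_le_of_norm_le (hg.mul_const ‖v‖) <|
        hFg.mono fun x hx => (F x).le_of_opNorm_le hx v

lemma weakIntegral_apply (hF : ∀ v, AEStronglyMeasurable (fun x => F x v) μ)
    (hg : Integrable g μ) (hFg : ∀ᵐ x ∂μ, ‖F x‖ ≤ g x) (v : V) :
    weakIntegral hF hg hFg v = ∫ x, F x v ∂μ :=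
  rfl

end WeakIntegral

lemma IsCb1.exists_clm_apply_eq_integral_fderiv {H : Type*} [NormedAddCommGroup H]
    [NormedSpace ℝ H] [MeasurableSpace H] [OpensMeasurableSpace H] {f : H → ℝ} (hf : IsCb1 f)
    (μ : Measure H) [IsFiniteMeasure μ] :
    ∃ L : H →L[ℝ] ℝ, ∀ v, L v = ∫ x, fderiv ℝ f x v ∂μ := by
  obtain ⟨hf_smooth, -, M, hM⟩ := hf
  have hf_meas (v : H) : AEStronglyMeasurable (fun x => fderiv ℝ f x v) μ :=
    ((hf_smooth.continuous_fderiv one_ne_zero).clm_apply continuous_const).aestronglyMeasurable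
  exact ⟨weakIntegral hf_meas (integrable_const M) (.of_forall hM), weakIntegral_apply _ _ _⟩

theorem fomin_estimate_along_basis_directions_general
    {ι H : Type*} [NormedAddCommGroup H] [InnerProductSpace ℝ H]
    [MeasurableSpace H] [OpensMeasurableSpace H] (e : HilbertBasis ι ℝ H)
    {lam : ι → ℝ} (hlam : ∀ i, lam i ≠ 0) {μ : Measure H} [IsFiniteMeasure μ]
    {c : ι → ℝ} {f : H → ℝ} (hf : IsCb1 f)
    (hbound : ∀ i, |∫ x, fderiv ℝ f x (e i) ∂μ| ≤ c i * √(∫ x, f x ^ 2 ∂μ))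
    (hC : Summable fun i => c i ^ 2 / lam i ^ 2)
    {k : H} (hk : Summable fun i => lam i ^ 2 * inner ℝ k (e i) ^ 2) :
    |∫ x, fderiv ℝ f x k ∂μ| ≤
      √(∑' i, c i ^ 2 / lam i ^ 2) *
        (√(∑' i, lam i ^ 2 * inner ℝ k (e i) ^ 2) * √(∫ x, f x ^ 2 ∂μ)) := by
  obtain ⟨L, hL⟩ := hf.exists_clm_apply_eq_integral_fderiv μ
  simp only [← hL] at hbound ⊢
  simpa only [Real.norm_eq_abs, sq_abs, mul_assoc] using
    norm_apply_le_of_norm_apply_hilbertBasis_le e L (Real.sqrt_nonneg _) hlam hbound hC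
      (k := k) (by simpa only [Real.norm_eq_abs, sq_abs] using hk)

/-- Summation of directionwise Fomin estimates along an orthonormal basis:
if `|μ(∂_{e_i} f)| ≤ c_i ‖f‖_{L²(μ)}` for every `i` and `C² := Σ_i c_i²/λ_i² < ∞`, then
`|μ(∂_k f)| ≤ C (Σ_i λ_i² ⟨k,e_i⟩²)^{1/2} ‖f‖_{L²(μ)}`. -/
theorem fomin_estimate_along_basis_directions
    {H : Type*} [NormedAddCommGroup H] [InnerProductSpace ℝ H] [CompleteSpace H]
    [TopologicalSpace.SeparableSpace H] [MeasurableSpace H] [BorelSpace H]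
    (e : HilbertBasis ℕ ℝ H)
    (lam : ℕ → ℝ) (hlam : ∀ i, 0 < lam i)
    (μ : Measure H) [IsProbabilityMeasure μ]
    (c : ℕ → ℝ) (hc : ∀ i, 0 ≤ c i)
    (hbound : ∀ (i : ℕ) (f : H → ℝ), IsCb1 f →
      |∫ x, fderiv ℝ f x (e i) ∂μ| ≤ c i * Real.sqrt (∫ x, (f x) ^ 2 ∂μ))
    (hC : Summable (fun i => (c i) ^ 2 / (lam i) ^ 2))
    (k : H) (hk : Summable (fun i => (lam i) ^ 2 * (inner ℝ k (e i) : ℝ) ^ 2))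
    (f : H → ℝ) (hf : IsCb1 f) :
    |∫ x, fderiv ℝ f x k ∂μ| ≤
      Real.sqrt (∑' i, (c i) ^ 2 / (lam i) ^ 2) *
        (Real.sqrt (∑' i, (lam i) ^ 2 * (inner ℝ k (e i) : ℝ) ^ 2) *
          Real.sqrt (∫ x, (f x) ^ 2 ∂μ)) :=
  fomin_estimate_along_basis_directions_general e (fun i => (hlam i).ne') hf
    (fun i => hbound i f hf) hC hk
end
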